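/- Define the block pattern W(n) as a list of Booleans by W(0)=[false], W(1)=[true], W(2)=[false,true], and for j ≥ 2, W(2j−1)=W(a*(j−1))++W(j) and W(2j)=W(j)++W(a(j)) (false representing a block A, true a block B). Then for every k ≥ 3, the list W(k) begins with false, ends with true, and exactly one of the following holds: (1) W(k) has no two consecutive entries equal to false and has two consecutive entries equal to true, or (2) W(k) has no two consecutive entries equal to true and has two consecutive entries equal to false. Equivalently, writing S_{A,B}(k) = A^{α_1}B^{β_1}⋯A^{α_n}B^{β_n}, either every α_i = 1 and some β_i > 1, or every β_i = 1 and some α_i > 1. -/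

import Mathlib

/-- Stern's diatomic sequence. -/
def stern : ℕ → ℕ
  | 0 => 0
  | 1 => 1
  | n + 2 =>
    if (n + 2) % 2 = 0 then stern ((n + 2) / 2)
    else stern ((n + 2) / 2) + stern ((n + 2) / 2 + 1)
decreasing_by all_goals omega

/-- OEIS A003602: a(1)=1, a(2n)=a(n), a(2n+1)=n+1. (a(0)=0 as junk value.) -/
def aseq : ℕ → ℕ
  | 0 => 0
  | 1 => 1
  | n + 2 =>
    if (n + 2) % 2 = 0 then aseq ((n + 2) / 2)
    else (n + 2) / 2 + 1
decreasing_by all_goals omega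

-- the modified sequence `a*`: zero at powers of two.
open Classical in
noncomputable def aStar (j : ℕ) : ℕ :=
  if ∃ k, j = 2 ^ k then 0 else aseq j

theorem aseq_le (n : ℕ) : aseq n ≤ n := by
  induction n using Nat.strong_induction_on with
  | _ n ih =>
    match n with
    | 0 => simp [aseq]
    | 1 => simp [aseq]
    | m + 2 =>
      rw [aseq]
      split
      · exact le_trans (ih ((m + 2) / 2) (by omega)) (by omega)
      · omega

theorem aStar_le (j : ℕ) : aStar j ≤ j := by
  unfold aStar
  split
  · omega
  · exact aseq_le j

/-- The Markov-type sequence `S_{A,B}(n)`. -/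
noncomputable def mseq {α : Type*} (A B : List α) : ℕ → List α
  | 0 => A
  | 1 => B
  | 2 => A ++ B
  | n + 3 =>
    if (n + 3) % 2 = 0 then
      mseq A B ((n + 3) / 2) ++ mseq A B (aseq ((n + 3) / 2))
    else
      mseq A B (aStar ((n + 4) / 2 - 1)) ++ mseq A B ((n + 4) / 2)
decreasing_by
  all_goals first
    | omega
    | exact lt_of_le_of_lt (aseq_le _) (by omega)
    | exact lt_of_le_of_lt (aStar_le _) (by omega)

/-- The block pattern `W(n)`: `false` represents a block `A`, `true` a block `B`. -/
noncomputable def wpat : ℕ → List Bool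
  | 0 => [false]
  | 1 => [true]
  | 2 => [false, true]
  | n + 3 =>
    if (n + 3) % 2 = 0 then
      wpat ((n + 3) / 2) ++ wpat (aseq ((n + 3) / 2))
    else
      wpat (aStar ((n + 4) / 2 - 1)) ++ wpat ((n + 4) / 2)
decreasing_by
  all_goals first
    | omega
    | exact lt_of_le_of_lt (aseq_le _) (by omega)
    | exact lt_of_le_of_lt (aStar_le _) (by omega)

/-!
Only the pairs inside `W(i)` and `W(j)` and the pair at the junction occur in `W(i) ++ W(j)`, and
since `W(i)` ends with `true` for `i ≠ 0` and `W(j)` begins with `false` for `j ≠ 1`, the junction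
is a repetition only if `i = 0` or `j = 1`.

Which letter is repeated in `W(k)` depends only on whether iterating `k ↦ ⌈k / 2⌉` leads to `3` or
to `4`, because `W(⌈k / 2⌉)` is a factor of `W(k)`. The other factor of `W(k)` has index `a(k)`
(`k` even) or `a*(k - 1)` (`k` odd). If this index is at least `3`, it lies on the
`⌈· / 2⌉`-orbit of `k`, so it repeats the same letter. The junction creates `true true` only at
`k = 2 ^ m`, which leads to `4`, and `false false` only at `k = 2 ^ m + 1`, which leads to `3`.
-/

theorem pair_infix_append_iff {α : Type*} {a b : α} {u v : List α} :
    [a, b] <:+: u ++ v ↔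
      [a, b] <:+: u ∨ [a, b] <:+: v ∨ u.getLast? = some a ∧ v.head? = some b := by
  rw [List.infix_append_iff_ne_nil]
  refine or_congr_right (or_congr_right ⟨?_, ?_⟩)
  · rintro ⟨s, t, s_ne_nil, t_ne_nil, hst, ⟨u', rfl⟩, ⟨v', rfl⟩⟩
    obtain ⟨rfl, rfl⟩ : s = [a] ∧ t = [b] := by
      rcases s with _ | ⟨x, _ | ⟨y, s⟩⟩ <;> simp_all
    simp
  · rintro ⟨hu, hv⟩
    obtain ⟨u', rfl⟩ := List.getLast?_eq_some_iff.mp hu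
    obtain ⟨v', rfl⟩ := List.head?_eq_some_iff.mp hv
    exact ⟨[a], [b], by simp, by simp, rfl, ⟨u', rfl⟩, ⟨v', rfl⟩⟩

theorem aseq_two_mul (n : ℕ) : aseq (2 * n) = aseq n := by
  cases n with
  | zero => rfl
  | succ m =>
    rw [show 2 * (m + 1) = 2 * m + 2 by ring, aseq, if_pos (by lia)]
    congr 1
    lia

theorem aseq_two_mul_add_one (n : ℕ) : aseq (2 * n + 1) = n + 1 := by
  cases n with
  | zero => simp [aseq]
  | succ m =>
    rw [show 2 * (m + 1) + 1 = 2 * m + 1 + 2 by ring, aseq, if_neg (by lia)]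
    lia

theorem aseq_ne_zero {n : ℕ} (hn : n ≠ 0) : aseq n ≠ 0 := by
  induction n using Nat.evenOddStrongRec with
  | h_even n ih => rw [aseq_two_mul]; exact ih n (by lia) (by lia)
  | h_odd n => rw [aseq_two_mul_add_one]; lia

theorem exists_eq_two_pow_of_aseq_eq_one {n : ℕ} (hn : aseq n = 1) : ∃ m, n = 2 ^ m := by
  induction n using Nat.evenOddStrongRec with
  | h_even n ih =>
    have n_ne_zero : n ≠ 0 := by rintro rfl; simp [aseq] at hn
    rw [aseq_two_mul] at hn
    obtain ⟨m, rfl⟩ := ih n (by lia) hn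
    exact ⟨m + 1, (pow_succ' 2 m).symm⟩
  | h_odd n =>
    rw [aseq_two_mul_add_one] at hn
    exact ⟨0, by lia⟩

theorem aStar_eq_zero_or_eq_aseq (n : ℕ) : aStar n = 0 ∨ aStar n = aseq n := by
  unfold aStar
  split
  · exact .inl rfl
  · exact .inr rfl

theorem exists_eq_two_pow_of_aStar_eq_zero {n : ℕ} (hn : n ≠ 0) (h : aStar n = 0) :
    ∃ m, n = 2 ^ m := by
  by_contra not_two_pow
  exact aseq_ne_zero hn (by rwa [aStar, if_neg not_two_pow] at h)

theorem aStar_ne_one (n : ℕ) : aStar n ≠ 1 := by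
  unfold aStar
  split_ifs with two_pow
  · exact zero_ne_one
  · exact fun h ↦ two_pow (exists_eq_two_pow_of_aseq_eq_one h)

theorem wpat_zero : wpat 0 = [false] := by rw [wpat]

theorem wpat_one : wpat 1 = [true] := by rw [wpat]

theorem wpat_two : wpat 2 = [false, true] := by rw [wpat]

theorem wpat_two_mul {n : ℕ} (hn : 2 ≤ n) : wpat (2 * n) = wpat n ++ wpat (aseq n) := by
  obtain ⟨m, rfl⟩ := Nat.exists_eq_add_of_le' hn
  rw [show 2 * (m + 2) = 2 * m + 1 + 3 by ring, wpat, if_pos (by lia),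
    show (2 * m + 1 + 3) / 2 = m + 2 by lia]

theorem wpat_two_mul_add_one {n : ℕ} (hn : 1 ≤ n) :
    wpat (2 * n + 1) = wpat (aStar n) ++ wpat (n + 1) := by
  obtain ⟨m, rfl⟩ := Nat.exists_eq_add_of_le' hn
  rw [show 2 * (m + 1) + 1 = 2 * m + 3 by ring, wpat, if_neg (by lia),
    show (2 * m + 4) / 2 = m + 2 by lia, Nat.add_sub_assoc (by lia)]

theorem head?_wpat {k : ℕ} (hk : k ≠ 1) : (wpat k).head? = some false := by
  induction k using Nat.evenOddStrongRec with
  | h_even n ih =>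
    obtain rfl | rfl | hn : n = 0 ∨ n = 1 ∨ 2 ≤ n := by lia
    · simp [wpat_zero]
    · simp [wpat_two]
    · rw [wpat_two_mul hn, List.head?_append, ih n (by lia) (by lia), Option.some_or]
  | h_odd n ih =>
    have aStar_le_n := aStar_le n
    rw [wpat_two_mul_add_one (by lia), List.head?_append,
      ih (aStar n) (by lia) (aStar_ne_one n), Option.some_or]

theorem getLast?_wpat {k : ℕ} (hk : k ≠ 0) : (wpat k).getLast? = some true := by
  induction k using Nat.evenOddStrongRec with
  | h_even n ih =>
    obtain rfl | hn : n = 1 ∨ 2 ≤ n := by lia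
    · simp [wpat_two]
    · have aseq_le_n := aseq_le n
      rw [wpat_two_mul hn, List.getLast?_append,
        ih (aseq n) (by lia) (aseq_ne_zero (by lia)), Option.some_or]
  | h_odd n ih =>
    obtain rfl | hn : n = 0 ∨ 1 ≤ n := by lia
    · simp [wpat_one]
    · rw [wpat_two_mul_add_one hn, List.getLast?_append, ih (n + 1) (by lia) (by lia),
        Option.some_or]

/-- The letter that occurs twice in a row in `wpat k`, for `3 ≤ k`: iterating `k ↦ ⌈k / 2⌉` reaches
`3` (letter `false`) or `4` (letter `true`). The value is the junk `false` for `k ≤ 2`. -/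
def repeatedLetter (k : ℕ) : Bool :=
  if k ≤ 4 then decide (k = 4) else repeatedLetter ((k + 1) / 2)
decreasing_by lia

theorem repeatedLetter_of_le_four {k : ℕ} (hk : k ≤ 4) : repeatedLetter k = decide (k = 4) := by
  rw [repeatedLetter, if_pos hk]

theorem repeatedLetter_of_four_lt {k : ℕ} (hk : 4 < k) :
    repeatedLetter k = repeatedLetter ((k + 1) / 2) := by
  rw [repeatedLetter, if_neg hk.not_ge]

theorem repeatedLetter_two_mul {n : ℕ} (hn : 3 ≤ n) :
    repeatedLetter (2 * n) = repeatedLetter n := by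
  rw [repeatedLetter_of_four_lt (by lia), show (2 * n + 1) / 2 = n by lia]

theorem repeatedLetter_two_mul_add_one {n : ℕ} (hn : 2 ≤ n) :
    repeatedLetter (2 * n + 1) = repeatedLetter (n + 1) := by
  rw [repeatedLetter_of_four_lt (by lia), show (2 * n + 1 + 1) / 2 = n + 1 by lia]

theorem repeatedLetter_two_pow {m : ℕ} (hm : 2 ≤ m) : repeatedLetter (2 ^ m) = true := by
  induction m, hm using Nat.le_induction with
  | base => simp [repeatedLetter_of_le_four]
  | succ m hm ih =>
    have four_le : 2 ^ 2 ≤ 2 ^ m := Nat.pow_le_pow_right two_pos hm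
    rw [pow_succ', repeatedLetter_two_mul (by lia), ih]

theorem repeatedLetter_two_pow_add_one (m : ℕ) : repeatedLetter (2 ^ m + 1) = false := by
  induction m with
  | zero => simp [repeatedLetter_of_le_four]
  | succ m ih =>
    obtain rfl | hm := m.eq_zero_or_pos
    · simp [repeatedLetter_of_le_four]
    · have two_le : 2 ^ 1 ≤ 2 ^ m := Nat.pow_le_pow_right two_pos hm
      rw [pow_succ', repeatedLetter_two_mul_add_one (by lia), ih]

theorem repeatedLetter_aseq {n : ℕ} (hn : 3 ≤ aseq n) :
    repeatedLetter (aseq n) = repeatedLetter n ∧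
      repeatedLetter (aseq n) = repeatedLetter (n + 1) := by
  induction n using Nat.evenOddStrongRec with
  | h_even n ih =>
    rw [aseq_two_mul] at hn ⊢
    have three_le : 3 ≤ n := hn.trans (aseq_le n)
    rw [repeatedLetter_two_mul three_le, repeatedLetter_two_mul_add_one (by lia)]
    exact ih n (by lia) hn
  | h_odd n =>
    rw [aseq_two_mul_add_one] at hn ⊢
    rw [repeatedLetter_two_mul_add_one (by lia), show 2 * n + 1 + 1 = 2 * (n + 1) by ring,
      repeatedLetter_two_mul hn]
    exact ⟨rfl, rfl⟩

theorem repeatedLetter_aStar {n : ℕ} (hn : 3 ≤ aStar n) :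
    repeatedLetter (aStar n) = repeatedLetter (n + 1) := by
  have aStar_eq_aseq : aStar n = aseq n := (aStar_eq_zero_or_eq_aseq n).resolve_left (by lia)
  rw [aStar_eq_aseq] at hn ⊢
  exact (repeatedLetter_aseq hn).2

theorem repeatedLetter_two_mul_of_aseq_eq_one {n : ℕ} (hn : 2 ≤ n) (h : aseq n = 1) :
    repeatedLetter (2 * n) = true := by
  obtain ⟨m, rfl⟩ := exists_eq_two_pow_of_aseq_eq_one h
  have m_ne_zero : m ≠ 0 := by rintro rfl; simp at hn
  rw [← pow_succ', repeatedLetter_two_pow (by lia)]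

theorem repeatedLetter_two_mul_add_one_of_aStar_eq_zero {n : ℕ} (hn : n ≠ 0) (h : aStar n = 0) :
    repeatedLetter (2 * n + 1) = false := by
  obtain ⟨m, rfl⟩ := exists_eq_two_pow_of_aStar_eq_zero hn h
  rw [← pow_succ', repeatedLetter_two_pow_add_one]

theorem wpat_half_infix_wpat {k : ℕ} (hk : 3 ≤ k) : wpat ((k + 1) / 2) <:+: wpat k := by
  obtain ⟨n, rfl | rfl⟩ := k.even_or_odd'
  · rw [wpat_two_mul (by lia), show (2 * n + 1) / 2 = n by lia]
    exact List.infix_append_left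
  · rw [wpat_two_mul_add_one (by lia), show (2 * n + 1 + 1) / 2 = n + 1 by lia]
    exact List.infix_append_right

theorem wpat_three : wpat 3 = [false, false, true] := by
  have aStar_one : aStar 1 = 0 := if_pos ⟨0, rfl⟩
  rw [show 3 = 2 * 1 + 1 from rfl, wpat_two_mul_add_one le_rfl, aStar_one, wpat_zero, wpat_two]
  rfl

theorem wpat_four : wpat 4 = [false, true, true] := by
  have aseq_two : aseq 2 = 1 := by simp [aseq]
  rw [show 4 = 2 * 2 from rfl, wpat_two_mul le_rfl, aseq_two, wpat_one, wpat_two]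
  rfl

theorem repeatedLetter_pair_infix_wpat {k : ℕ} (hk : 3 ≤ k) :
    [repeatedLetter k, repeatedLetter k] <:+: wpat k := by
  induction k using Nat.strong_induction_on with
  | h k ih =>
    obtain rfl | rfl | hk : k = 3 ∨ k = 4 ∨ 4 < k := by lia
    · rw [repeatedLetter_of_le_four (by lia), wpat_three]
      exact ⟨[], [true], rfl⟩
    · rw [repeatedLetter_of_le_four le_rfl, wpat_four]
      exact ⟨[false], [], rfl⟩
    · rw [repeatedLetter_of_four_lt hk]
      exact (ih _ (by lia) (by lia)).trans (wpat_half_infix_wpat (by lia))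

theorem not_pair_infix_wpat_append {i j : ℕ} {c : Bool}
    (not_infix_left : ¬ [c, c] <:+: wpat i) (not_infix_right : ¬ [c, c] <:+: wpat j)
    (left_ne_zero : c = false → i ≠ 0) (right_ne_one : c = true → j ≠ 1) :
    ¬ [c, c] <:+: wpat i ++ wpat j := by
  rw [pair_infix_append_iff]
  rintro (h | h | ⟨last_eq, head_eq⟩)
  · exact not_infix_left h
  · exact not_infix_right h
  · cases c with
    | false => simp [getLast?_wpat (left_ne_zero rfl)] at last_eq
    | true => simp [head?_wpat (right_ne_one rfl)] at head_eq

theorem not_pair_infix_wpat_of_le_two {k : ℕ} (hk : k ≤ 2) (c : Bool) : ¬ [c, c] <:+: wpat k := by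
  interval_cases k <;> cases c <;> simp [wpat_zero, wpat_one, wpat_two, List.infix_cons_iff]

theorem not_pair_infix_wpat {k : ℕ} {c : Bool} (hc : 3 ≤ k → c ≠ repeatedLetter k) :
    ¬ [c, c] <:+: wpat k := by
  induction k using Nat.evenOddStrongRec with
  | h_even n ih =>
    obtain hn | hn : n ≤ 1 ∨ 2 ≤ n := by lia
    · exact not_pair_infix_wpat_of_le_two (by lia) c
    specialize hc (by lia)
    have aseq_le_n := aseq_le n
    rw [wpat_two_mul hn]
    refine not_pair_infix_wpat_append (ih n (by lia) fun three_le ↦ ?_)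
      (ih (aseq n) (by lia) fun three_le ↦ ?_) (fun _ ↦ by lia) ?_
    · rwa [← repeatedLetter_two_mul three_le]
    · rwa [(repeatedLetter_aseq three_le).1, ← repeatedLetter_two_mul (by lia)]
    · rintro rfl aseq_eq_one
      exact hc (repeatedLetter_two_mul_of_aseq_eq_one hn aseq_eq_one).symm
  | h_odd n ih =>
    obtain rfl | hn : n = 0 ∨ 1 ≤ n := by lia
    · exact not_pair_infix_wpat_of_le_two (by lia) c
    specialize hc (by lia)
    have aStar_le_n := aStar_le n
    rw [wpat_two_mul_add_one hn]
    refine not_pair_infix_wpat_append (ih (aStar n) (by lia) fun three_le ↦ ?_)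
      (ih (n + 1) (by lia) fun three_le ↦ ?_) ?_ (fun _ ↦ by lia)
    · rwa [repeatedLetter_aStar three_le, ← repeatedLetter_two_mul_add_one (by lia)]
    · rwa [← repeatedLetter_two_mul_add_one (by lia)]
    · rintro rfl aStar_eq_zero
      exact hc (repeatedLetter_two_mul_add_one_of_aStar_eq_zero (by lia) aStar_eq_zero).symm

/-- for every `k ≥ 3`, the block pattern `W(k)` begins with `false`, ends
with `true`, and exactly one of the following holds: (1) it has no two consecutive `false`
entries and has two consecutive `true` entries, or (2) it has no two consecutive `true`
entries and has two consecutive `false` entries. -/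
theorem stmt16 (k : ℕ) (hk : 3 ≤ k) :
    (wpat k).head? = some false ∧ (wpat k).getLast? = some true ∧
      Xor'
        ((¬ ∃ l₁ l₂, wpat k = l₁ ++ [false, false] ++ l₂) ∧
          ∃ l₁ l₂, wpat k = l₁ ++ [true, true] ++ l₂)
        ((¬ ∃ l₁ l₂, wpat k = l₁ ++ [true, true] ++ l₂) ∧
          ∃ l₁ l₂, wpat k = l₁ ++ [false, false] ++ l₂) := by
  have infix_iff (c : Bool) : (∃ l₁ l₂, wpat k = l₁ ++ [c, c] ++ l₂) ↔ [c, c] <:+: wpat k := by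
    simp only [List.IsInfix, eq_comm]
  have repeated := repeatedLetter_pair_infix_wpat hk
  have not_repeated : ¬ [!repeatedLetter k, !repeatedLetter k] <:+: wpat k :=
    not_pair_infix_wpat fun _ ↦ Bool.not_ne_self _
  refine ⟨head?_wpat (by lia), getLast?_wpat (by lia), ?_⟩
  rw [infix_iff, infix_iff]
  cases hc : repeatedLetter k <;> rw [hc] at repeated not_repeated
  · exact .inr ⟨⟨not_repeated, repeated⟩, fun h ↦ not_repeated h.2⟩
  · exact .inl ⟨⟨not_repeated, repeated⟩, fun h ↦ not_repeated h.2⟩
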